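/- Let A be a Hopf algebra over a field K with bijective antipode S, and let α, β, γ, δ be Hopf algebra automorphisms of A (algebra automorphisms with Δ ∘ α = (α ⊗ α) ∘ Δ, etc.). Let V be an (α, β)-Yetter–Drinfel'd module and W a (γ, δ)-Yetter–Drinfel'd module over A. Then V ⊗ W, with left A-action a·(v ⊗ w) = γ(a₍₁₎)·v ⊗ (γ⁻¹βγ)(a₍₂₎)·w and right A-coaction ρ(v ⊗ w) = v₍₀₎ ⊗ w₍₀₎ ⊗ w₍₁₎v₍₁₎, is an (αγ, δγ⁻¹βγ)-Yetter–Drinfel'd module over A. -/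

import Mathlib

/-!
STATEMENT 17: For a Hopf algebra `A` over a field `K` with bijective antipode, Hopf
algebra automorphisms `α, β, γ, δ` of `A`, an `(α,β)`-Yetter-Drinfel'd module `V`
and a `(γ,δ)`-Yetter-Drinfel'd module `W`, the tensor product `V ⊗ W` with action
`a·(v ⊗ w) = γ(a₍₁₎)·v ⊗ (γ⁻¹βγ)(a₍₂₎)·w` and coaction
`ρ(v ⊗ w) = v₍₀₎ ⊗ w₍₀₎ ⊗ w₍₁₎v₍₁₎` is an `(αγ, δγ⁻¹βγ)`-Yetter-Drinfel'd module.
-/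

/-!
Idea of the proof. Linear maps from `A` to an algebra of operators form an associative algebra
under convolution, `(F * G)(a) = F(a₍₁₎) ∘ G(a₍₂₎)`. The Yetter-Drinfel'd condition for `V` reads
`ρ(a·v) = (R * Q * L)(a) (ρ v)`, where `R`, `Q`, `L` are right multiplication by `α S⁻¹(a)` on
`A`, the action of `a` on `V`, and left multiplication by `β(a)` on `A` (`ydRHS_apply`).

Write `θ = γ⁻¹βγ` and let `μ` be the map `(v ⊗ x) ⊗ (w ⊗ y) ↦ (v ⊗ w) ⊗ y x` (`mergeMul`). Then
`ρ(a·(v ⊗ w))` is `μ` applied to `(P * Q * B * C * T * U)(a) (ρ v ⊗ ρ w)`, the first three factors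
being those of `V` precomposed with `γ`, the last three those of `W` precomposed with `θ`
(`tensorCoact_twistDiagAct`, `comp_ydOp_comp`). The map `μ` intertwines `P`, `Q`, `T`, `U` with the
corresponding operators on `(V ⊗ W) ⊗ A`, and it intertwines `B * C` with the convolution unit,
because the factor inserted between `y` and `x` is
`γ S⁻¹ θ(a₍₂₎) · βγ(a₍₁₎) = S⁻¹(βγ(a₍₂₎)) βγ(a₍₁₎) = ε(a)` (`intertwines_inner`).
Intertwining is stable under convolution (`Intertwines.mul`), so `ρ(a·t)` equals
`(P' * Q' * T' * U')(a) (ρ t)`, which is the condition for `V ⊗ W`. This uses that the antipode and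
the counit commute with Hopf automorphisms (`IsHopfAuto.antipode_comm`,
`IsHopfAuto.counit_apply`).

The action is a module structure since it comes from an algebra homomorphism into
`End (V ⊗ W)`; coassociativity and counitality reduce, by naturality of `μ`, to those of `V`
and `W` and to multiplicativity of `Δ` and `ε`.
-/

open TensorProduct LinearMap

section

variable (K A : Type*) [Field K] [Ring A] [HopfAlgebra K A]

/-- The antipode as a linear map. -/
noncomputable def antipodeL : A →ₗ[K] A := HopfAlgebra.antipode (R := K)

/-- The action of `A` on a left `A`-module, as a `K`-linear map `A ⊗ V → V`. -/
noncomputable def actMap (V : Type*) [AddCommGroup V] [Module K V] [Module A V]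
    [IsScalarTower K A V] : A ⊗[K] V →ₗ[K] V :=
  TensorProduct.lift (LinearMap.mk₂ K (fun a v => a • v)
    (fun a b v => add_smul a b v)
    (fun k a v => smul_assoc k a v)
    (fun a u v => smul_add a u v)
    (fun a k v => (smul_comm a k v).symm))

variable {K A}

/-- Coassociativity of a right coaction `ρ : V → V ⊗ A`:
`(ρ ⊗ id) ∘ ρ = (id ⊗ Δ) ∘ ρ`. -/
def IsCoassoc {V : Type*} [AddCommGroup V] [Module K V]
    (ρ : V →ₗ[K] V ⊗[K] A) : Prop :=
  rTensor A ρ ∘ₗ ρ =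
    (TensorProduct.assoc K V A A).symm.toLinearMap
      ∘ₗ lTensor V (Coalgebra.comul (R := K)) ∘ₗ ρ

/-- Counitality of a right coaction `ρ : V → V ⊗ A`: `(id ⊗ ε) ∘ ρ = id`. -/
def IsCounital {V : Type*} [AddCommGroup V] [Module K V]
    (ρ : V →ₗ[K] V ⊗[K] A) : Prop :=
  lTensor V (Coalgebra.counit (R := K)) ∘ₗ ρ = (TensorProduct.rid K V).symm.toLinearMap

variable (K A)

/-- For a left action `act : A ⊗ V → V`, a right coaction `ρ : V → V ⊗ A` and twisting
maps `φ ψ : A → A`, the map `a ⊗ v ↦ a₍₂₎·v₍₀₎ ⊗ ψ(a₍₃₎) v₍₁₎ φ(a₍₁₎)`.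
With `φ = S⁻¹`, `ψ = id` this is the right-hand side of the Yetter-Drinfel'd
compatibility condition. -/
noncomputable def ydRHS (V : Type*) [AddCommGroup V] [Module K V]
    (act : A ⊗[K] V →ₗ[K] V) (ρ : V →ₗ[K] V ⊗[K] A) (φ ψ : A →ₗ[K] A) :
    A ⊗[K] V →ₗ[K] V ⊗[K] A :=
  lTensor V (mul' K A ∘ₗ lTensor A (mul' K A) ∘ₗ rTensor (A ⊗[K] A) ψ)
  ∘ₗ rTensor (A ⊗[K] (A ⊗[K] A)) act
  ∘ₗ (tensorTensorTensorComm K A A V (A ⊗[K] A)).toLinearMap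
  ∘ₗ lTensor (A ⊗[K] A) (TensorProduct.assoc K V A A).toLinearMap
  ∘ₗ lTensor (A ⊗[K] A) (rTensor A ρ)
  ∘ₗ lTensor (A ⊗[K] A) (TensorProduct.comm K A V).toLinearMap
  ∘ₗ lTensor (A ⊗[K] A) (rTensor V φ)
  ∘ₗ (TensorProduct.assoc K (A ⊗[K] A) A V).toLinearMap
  ∘ₗ rTensor V (rTensor A (Coalgebra.comul (R := K)))
  ∘ₗ rTensor V (TensorProduct.comm K A A).toLinearMap
  ∘ₗ rTensor V (Coalgebra.comul (R := K))

/-- The Yetter-Drinfel'd compatibility condition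
`ρ(a·v) = a₍₂₎·v₍₀₎ ⊗ a₍₃₎ v₍₁₎ S⁻¹(a₍₁₎)`, where `Si` denotes `S⁻¹`. -/
def IsYD (V : Type*) [AddCommGroup V] [Module K V]
    (act : A ⊗[K] V →ₗ[K] V) (ρ : V →ₗ[K] V ⊗[K] A) (Si : A →ₗ[K] A) : Prop :=
  ρ ∘ₗ act = ydRHS K A V act ρ Si LinearMap.id

/-- The braiding-type map `z ⊗ u ↦ u₍₀₎ ⊗ u₍₁₎·z` determined by an action on `Z`
and a coaction on `U`. -/
noncomputable def braidC (Z U : Type*) [AddCommGroup Z] [Module K Z]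
    [AddCommGroup U] [Module K U]
    (σ : A ⊗[K] Z →ₗ[K] Z) (ρU : U →ₗ[K] U ⊗[K] A) :
    Z ⊗[K] U →ₗ[K] U ⊗[K] Z :=
  lTensor U σ
  ∘ₗ (TensorProduct.assoc K U A Z).toLinearMap
  ∘ₗ (TensorProduct.comm K Z (U ⊗[K] A)).toLinearMap
  ∘ₗ lTensor Z ρU

/-- The diagonal action `a ⊗ (x ⊗ y) ↦ a₍₁₎·x ⊗ a₍₂₎·y` on a tensor product. -/
noncomputable def diagAct (X Y : Type*) [AddCommGroup X] [Module K X]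
    [AddCommGroup Y] [Module K Y]
    (σX : A ⊗[K] X →ₗ[K] X) (σY : A ⊗[K] Y →ₗ[K] Y) :
    A ⊗[K] (X ⊗[K] Y) →ₗ[K] X ⊗[K] Y :=
  TensorProduct.map σX σY
  ∘ₗ (tensorTensorTensorComm K A A X Y).toLinearMap
  ∘ₗ rTensor (X ⊗[K] Y) (Coalgebra.comul (R := K))

/-- The coaction `v ⊗ w ↦ v₍₀₎ ⊗ w₍₀₎ ⊗ w₍₁₎v₍₁₎` on a tensor product. -/
noncomputable def tensorCoact (V W : Type*) [AddCommGroup V] [Module K V]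
    [AddCommGroup W] [Module K W]
    (ρV : V →ₗ[K] V ⊗[K] A) (ρW : W →ₗ[K] W ⊗[K] A) :
    V ⊗[K] W →ₗ[K] (V ⊗[K] W) ⊗[K] A :=
  lTensor (V ⊗[K] W) (mul' K A ∘ₗ (TensorProduct.comm K A A).toLinearMap)
  ∘ₗ (tensorTensorTensorComm K V A W A).toLinearMap
  ∘ₗ TensorProduct.map ρV ρW

end

section

variable (K A : Type*) [Field K] [Ring A] [HopfAlgebra K A]

/-- An algebra automorphism of `A` is a Hopf algebra automorphism when it commutes
with the comultiplication. -/
def IsHopfAuto (α : A ≃ₐ[K] A) : Prop :=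
  (Coalgebra.comul (R := K)) ∘ₗ α.toLinearMap
    = TensorProduct.map α.toLinearMap α.toLinearMap ∘ₗ Coalgebra.comul (R := K)

/-- The twisted diagonal action `a ⊗ (v ⊗ w) ↦ φ₁(a₍₁₎)·v ⊗ φ₂(a₍₂₎)·w`. -/
noncomputable def twistDiagAct (V W : Type*) [AddCommGroup V] [Module K V]
    [AddCommGroup W] [Module K W]
    (σV : A ⊗[K] V →ₗ[K] V) (σW : A ⊗[K] W →ₗ[K] W) (φ₁ φ₂ : A →ₗ[K] A) :
    A ⊗[K] (V ⊗[K] W) →ₗ[K] V ⊗[K] W :=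
  TensorProduct.map σV σW
  ∘ₗ (tensorTensorTensorComm K A A V W).toLinearMap
  ∘ₗ rTensor (V ⊗[K] W) (TensorProduct.map φ₁ φ₂)
  ∘ₗ rTensor (V ⊗[K] W) (Coalgebra.comul (R := K))

open WithConv

variable {K A}

/-! ### Hopf algebra automorphisms and the inverse antipode -/

theorem IsHopfAuto.comul_apply {γ : A ≃ₐ[K] A} (h : IsHopfAuto K A γ) (a : A) :
    Coalgebra.comul (R := K) (γ a)
      = TensorProduct.map γ.toLinearMap γ.toLinearMap (Coalgebra.comul (R := K) a) :=
  LinearMap.congr_fun h a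

theorem IsHopfAuto.trans {β γ : A ≃ₐ[K] A} (hβ : IsHopfAuto K A β) (hγ : IsHopfAuto K A γ) :
    IsHopfAuto K A (γ.trans β) := by
  ext a
  change Coalgebra.comul (R := K) (β (γ a)) = _
  rw [hβ.comul_apply, hγ.comul_apply]
  simp only [LinearMap.comp_apply]
  generalize Coalgebra.comul (R := K) a = z
  induction z with
  | zero => simp
  | tmul x y => simp
  | add x y hx hy => simp only [map_add, hx, hy]

theorem IsHopfAuto.symm {γ : A ≃ₐ[K] A} (hγ : IsHopfAuto K A γ) :
    IsHopfAuto K A γ.symm := by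
  ext a
  obtain ⟨b, rfl⟩ := γ.surjective a
  simp only [LinearMap.comp_apply, AlgEquiv.toLinearMap_apply, hγ.comul_apply,
    AlgEquiv.symm_apply_apply]
  generalize Coalgebra.comul (R := K) b = z
  induction z with
  | zero => simp
  | tmul x y => simp
  | add x y hx hy => simp only [map_add, ← hx, ← hy]

/-- Compatibility with the counit is not part of `IsHopfAuto`; it follows because `ε ∘ γ` is
again a left counit. -/
theorem IsHopfAuto.counit_apply {γ : A ≃ₐ[K] A} (hγ : IsHopfAuto K A γ) (a : A) :
    Coalgebra.counit (R := K) (γ a) = Coalgebra.counit (R := K) a := by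
  have h1 : TensorProduct.lid K A (rTensor A (Coalgebra.counit (R := K) ∘ₗ γ.toLinearMap)
      (Coalgebra.comul (R := K) a)) = a := by
    apply γ.injective
    have := congrArg (TensorProduct.lid K A)
      (Coalgebra.rTensor_counit_comul (R := K) (γ a))
    rw [hγ.comul_apply, TensorProduct.lid_tmul, one_smul] at this
    rw [← this]
    generalize Coalgebra.comul (R := K) a = z
    induction z with
    | zero => simp
    | tmul x y => simp
    | add x y hx hy => simp only [map_add, hx, hy]
  have h2 := congrArg (fun z => Coalgebra.counit (R := K) (γ (TensorProduct.rid K A z)))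
    (Coalgebra.lTensor_counit_comul (R := K) a)
  simp only [TensorProduct.rid_tmul, one_smul] at h2
  rw [← h2]
  conv_rhs => rw [← h1]
  generalize Coalgebra.comul (R := K) a = z
  induction z with
  | zero => simp
  | tmul x y => simp [mul_comm]
  | add x y hx hy => simp only [map_add, hx, hy]

/-- Precomposition with a Hopf automorphism is multiplicative for the convolution product. -/
theorem IsHopfAuto.convMul_comp {γ : A ≃ₐ[K] A} (hγ : IsHopfAuto K A γ)
    {E : Type*} [Semiring E] [Algebra K E] (f g : A →ₗ[K] E) :
    (toConv f * toConv g).ofConv ∘ₗ γ.toLinearMap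
      = (toConv (f ∘ₗ γ.toLinearMap) * toConv (g ∘ₗ γ.toLinearMap)).ofConv := by
  simp only [LinearMap.convMul_def, ofConv_toConv, LinearMap.comp_assoc, TensorProduct.map_comp]
  rw [hγ]

/-- The antipode commutes with `γ`: both `S ∘ γ` and `γ ∘ S` are convolution inverse to `γ`. -/
theorem IsHopfAuto.antipode_comm {γ : A ≃ₐ[K] A} (hγ : IsHopfAuto K A γ) (a : A) :
    antipodeL K A (γ a) = γ (antipodeL K A a) := by
  have h1 : toConv (antipodeL K A ∘ₗ γ.toLinearMap) * toConv γ.toLinearMap = 1 := by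
    have := hγ.convMul_comp (antipodeL K A) LinearMap.id
    rw [antipodeL, LinearMap.antipode_mul_id, LinearMap.id_comp] at this
    apply ofConv_injective
    rw [antipodeL, ← this]
    ext x
    simp [LinearMap.convOne_def, hγ.counit_apply]
  have h2 : toConv γ.toLinearMap * toConv (γ.toLinearMap ∘ₗ antipodeL K A) = 1 := by
    have := LinearMap.algHom_comp_convMul_distrib (γ : A →ₐ[K] A)
      (toConv LinearMap.id) (toConv (antipodeL K A))
    rw [antipodeL, LinearMap.id_mul_antipode] at this
    apply ofConv_injective
    refine this.symm.trans ?_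
    ext x
    simp [LinearMap.convOne_def]
  have := left_inv_eq_right_inv h1 h2
  exact LinearMap.congr_fun (toConv_injective this) a

theorem IsHopfAuto.antipodeInv_comm {γ : A ≃ₐ[K] A} (hγ : IsHopfAuto K A γ) {Si : A →ₗ[K] A}
    (hSi₁ : Si ∘ₗ antipodeL K A = LinearMap.id) (hSi₂ : antipodeL K A ∘ₗ Si = LinearMap.id)
    (a : A) : Si (γ a) = γ (Si a) := by
  have h1 : ∀ x, Si (antipodeL K A x) = x := LinearMap.congr_fun hSi₁
  have h2 : ∀ x, antipodeL K A (Si x) = x := LinearMap.congr_fun hSi₂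
  rw [← h1 (γ (Si a)), hγ.antipode_comm, h2]

/-- `S⁻¹(a₍₂₎) a₍₁₎ = ε(a)`. -/
theorem antipodeInv_mul {Si : A →ₗ[K] A}
    (hSi₁ : Si ∘ₗ antipodeL K A = LinearMap.id) (hSi₂ : antipodeL K A ∘ₗ Si = LinearMap.id)
    (a : A) :
    mul' K A (TensorProduct.map Si LinearMap.id
      (TensorProduct.comm K A A (Coalgebra.comul (R := K) a)))
      = algebraMap K A (Coalgebra.counit (R := K) a) := by
  have h1 : ∀ x, Si (antipodeL K A x) = x := LinearMap.congr_fun hSi₁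
  have h2 : ∀ x, antipodeL K A (Si x) = x := LinearMap.congr_fun hSi₂
  apply Function.LeftInverse.injective h1
  have h3 : antipodeL K A (algebraMap K A (Coalgebra.counit (R := K) a))
      = algebraMap K A (Coalgebra.counit (R := K) a) := by
    rw [Algebra.algebraMap_eq_smul_one, map_smul, antipodeL, HopfAlgebra.antipode_one]
  rw [h3, ← HopfAlgebra.mul_antipode_rTensor_comul_apply]
  generalize Coalgebra.comul (R := K) a = z
  induction z with
  | zero => simp
  | tmul x y =>
    have h4 := h2 y
    simp only [antipodeL] at h4
    simp [antipodeL, HopfAlgebra.antipode_mul_antidistrib, h4]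
  | add x y hx hy => simp only [map_add, hx, hy]

/-! ### Compatibility conditions as convolution products of operators -/

section Operators

variable {X : Type*} [AddCommGroup X] [Module K X]

/-- The operator-valued map `a ↦ (x ⊗ b ↦ x ⊗ b φ(a))`. -/
noncomputable def opRight (X : Type*) [AddCommGroup X] [Module K X] (φ : A →ₗ[K] A) :
    A →ₗ[K] Module.End K (X ⊗[K] A) :=
  lTensorHom X ∘ₗ (LinearMap.mul K A).flip ∘ₗ φ

/-- The operator-valued map `a ↦ (x ⊗ b ↦ x ⊗ ψ(a) b)`. -/
noncomputable def opLeft (X : Type*) [AddCommGroup X] [Module K X] (ψ : A →ₗ[K] A) :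
    A →ₗ[K] Module.End K (X ⊗[K] A) :=
  lTensorHom X ∘ₗ LinearMap.mul K A ∘ₗ ψ

@[simp] theorem opRight_apply (φ : A →ₗ[K] A) (a b : A) (x : X) :
    opRight X φ a (x ⊗ₜ b) = x ⊗ₜ[K] (b * φ a) := rfl

@[simp] theorem opLeft_apply (φ : A →ₗ[K] A) (a b : A) (x : X) :
    opLeft X φ a (x ⊗ₜ b) = x ⊗ₜ[K] (φ a * b) := rfl

/-- The map `a ↦ (x ⊗ b ↦ a₍₂₎·x ⊗ ψ(a₍₃₎) b φ(a₍₁₎))`, written as a convolution product. -/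
noncomputable def ydOp (σ : A →ₗ[K] Module.End K X) (φ ψ : A →ₗ[K] A) :
    A →ₗ[K] Module.End K (X ⊗[K] A) :=
  (toConv (opRight X φ) * (toConv (rTensorHom A ∘ₗ σ) * toConv (opLeft X ψ))).ofConv

theorem ydRHS_apply (act : A ⊗[K] X →ₗ[K] X) (ρ : X →ₗ[K] X ⊗[K] A) (φ ψ : A →ₗ[K] A)
    (a : A) (t : X) :
    ydRHS K A X act ρ φ ψ (a ⊗ₜ t) = ydOp (TensorProduct.curry act) φ ψ a (ρ t) := by
  simp only [ydRHS, ydOp, LinearMap.comp_apply, rTensor_tmul, LinearMap.convMul_def, ofConv_toConv]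
  generalize Coalgebra.comul (R := K) a = z
  induction z with
  | zero => simp
  | add x y hx hy => simp only [map_add, add_tmul, LinearMap.add_apply, hx, hy]
  | tmul x y =>
    simp only [LinearEquiv.coe_coe, TensorProduct.comm_tmul, rTensor_tmul,
      TensorProduct.map_tmul, mul'_apply, LinearMap.comp_apply]
    generalize Coalgebra.comul (R := K) y = z
    induction z with
    | zero => simp
    | add x y hx hy => simp only [map_add, add_tmul, mul_add, LinearMap.add_apply, hx, hy]
    | tmul y z =>
      simp only [LinearEquiv.coe_coe, TensorProduct.assoc_tmul, lTensor_tmul, rTensor_tmul,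
        TensorProduct.comm_tmul,
        TensorProduct.map_tmul, mul'_apply, LinearMap.comp_apply, Module.End.mul_apply]
      generalize ρ t = s
      induction s with
      | zero => simp
      | add x y hx hy => simp only [map_add, add_tmul, tmul_add, hx, hy]
      | tmul p b => simp [mul_assoc]

theorem twistDiagAct_apply {V W : Type*} [AddCommGroup V] [Module K V]
    [AddCommGroup W] [Module K W]
    (σV : A ⊗[K] V →ₗ[K] V) (σW : A ⊗[K] W →ₗ[K] W) (φ₁ φ₂ : A →ₗ[K] A)
    (a : A) (t : V ⊗[K] W) :
    twistDiagAct K A V W σV σW φ₁ φ₂ (a ⊗ₜ t) =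
      (toConv (rTensorHom W ∘ₗ TensorProduct.curry σV ∘ₗ φ₁)
        * toConv (lTensorHom V ∘ₗ TensorProduct.curry σW ∘ₗ φ₂)).ofConv a t := by
  simp only [twistDiagAct, LinearMap.comp_apply, rTensor_tmul, LinearMap.convMul_def, ofConv_toConv]
  generalize Coalgebra.comul (R := K) a = z
  induction z with
  | zero => simp
  | add x y hx hy => simp only [map_add, add_tmul, LinearMap.add_apply, hx, hy]
  | tmul x y =>
    induction t with
    | zero => simp
    | add x y hx hy => simp only [map_add, tmul_add, hx, hy]
    | tmul v w => simp

variable (K) in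
/-- The algebra homomorphism `f ↦ f ⊗ id`. -/
noncomputable def endFst (X Y : Type*) [AddCommGroup X] [Module K X] [AddCommGroup Y]
    [Module K Y] : Module.End K X →ₐ[K] Module.End K (X ⊗[K] Y) :=
  Module.End.rTensorAlgHom K X Y

variable (K) in
/-- The algebra homomorphism `g ↦ id ⊗ g`. -/
noncomputable def endSnd (X Y : Type*) [AddCommGroup X] [Module K X] [AddCommGroup Y]
    [Module K Y] : Module.End K Y →ₐ[K] Module.End K (X ⊗[K] Y) :=
  Module.End.lTensorAlgHom K Y X

@[simp] theorem endFst_tmul {Y : Type*} [AddCommGroup Y] [Module K Y] (f : Module.End K X)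
    (x : X) (y : Y) : endFst K X Y f (x ⊗ₜ y) = f x ⊗ₜ y := rfl

@[simp] theorem endSnd_tmul {Y : Type*} [AddCommGroup Y] [Module K Y] (g : Module.End K Y)
    (x : X) (y : Y) : endSnd K X Y g (x ⊗ₜ y) = x ⊗ₜ g y := rfl

end Operators

/-- `μ` intertwines the operator-valued maps `F` and `F'`. -/
def Intertwines {X Y : Type*} [AddCommGroup X] [Module K X] [AddCommGroup Y] [Module K Y]
    (μ : X →ₗ[K] Y) (F : WithConv (A →ₗ[K] Module.End K X))
    (F' : WithConv (A →ₗ[K] Module.End K Y)) : Prop :=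
  ∀ a, μ ∘ₗ F.ofConv a = F'.ofConv a ∘ₗ μ

theorem Intertwines.mul {X Y : Type*} [AddCommGroup X] [Module K X] [AddCommGroup Y] [Module K Y]
    {μ : X →ₗ[K] Y} {F G : WithConv (A →ₗ[K] Module.End K X)}
    {F' G' : WithConv (A →ₗ[K] Module.End K Y)}
    (hF : Intertwines μ F F') (hG : Intertwines μ G G') : Intertwines μ (F * G) (F' * G') := by
  have hF' : ∀ a t, μ (F.ofConv a t) = F'.ofConv a (μ t) := fun a => LinearMap.congr_fun (hF a)
  have hG' : ∀ a t, μ (G.ofConv a t) = G'.ofConv a (μ t) := fun a => LinearMap.congr_fun (hG a)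
  intro a
  ext t
  simp only [LinearMap.convMul_def, ofConv_toConv, LinearMap.comp_apply]
  generalize Coalgebra.comul (R := K) a = z
  induction z with
  | zero => simp
  | add x y hx hy => simp only [map_add, LinearMap.add_apply, hx, hy]
  | tmul x y => simp [hF', hG']

section Tensor

variable {V W : Type*} [AddCommGroup V] [Module K V] [AddCommGroup W] [Module K W]

variable (K A V W) in
/-- The map `(v ⊗ x) ⊗ (w ⊗ y) ↦ (v ⊗ w) ⊗ y x`. -/
noncomputable def mergeMul : (V ⊗[K] A) ⊗[K] (W ⊗[K] A) →ₗ[K] (V ⊗[K] W) ⊗[K] A :=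
  lTensor (V ⊗[K] W) (mul' K A ∘ₗ (TensorProduct.comm K A A).toLinearMap)
  ∘ₗ (tensorTensorTensorComm K V A W A).toLinearMap

@[simp] theorem mergeMul_tmul (v : V) (w : W) (x y : A) :
    mergeMul K A V W ((v ⊗ₜ x) ⊗ₜ (w ⊗ₜ y)) = (v ⊗ₜ w) ⊗ₜ (y * x) := by
  simp [mergeMul]

theorem tensorCoact_tmul (ρV : V →ₗ[K] V ⊗[K] A) (ρW : W →ₗ[K] W ⊗[K] A) (v : V) (w : W) :
    tensorCoact K A V W ρV ρW (v ⊗ₜ w) = mergeMul K A V W (ρV v ⊗ₜ ρW w) := rfl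

theorem linearMap_ext_fourfold {Z : Type*} [AddCommMonoid Z] [Module K Z]
    {f g : (V ⊗[K] A) ⊗[K] (W ⊗[K] A) →ₗ[K] Z}
    (h : ∀ v x w y, f ((v ⊗ₜ x) ⊗ₜ (w ⊗ₜ y)) = g ((v ⊗ₜ x) ⊗ₜ (w ⊗ₜ y))) : f = g := by
  ext v x w y
  exact h v x w y

/-! ### The coaction on the tensor product -/

variable (K A V W) in
/-- The map `((v ⊗ x₁) ⊗ x₂) ⊗ ((w ⊗ y₁) ⊗ y₂) ↦ ((v ⊗ w) ⊗ y₁ x₁) ⊗ y₂ x₂`. -/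
noncomputable def mergeMul₂ :
    ((V ⊗[K] A) ⊗[K] A) ⊗[K] ((W ⊗[K] A) ⊗[K] A) →ₗ[K] ((V ⊗[K] W) ⊗[K] A) ⊗[K] A :=
  rTensor A (mergeMul K A V W) ∘ₗ mergeMul K A (V ⊗[K] A) (W ⊗[K] A)

theorem isCoassoc_tensorCoact {ρV : V →ₗ[K] V ⊗[K] A} {ρW : W →ₗ[K] W ⊗[K] A}
    (hV : IsCoassoc (K := K) (A := A) ρV) (hW : IsCoassoc (K := K) (A := A) ρW) :
    IsCoassoc (K := K) (A := A) (tensorCoact K A V W ρV ρW) := by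
  have hV' := LinearMap.congr_fun hV
  have hW' := LinearMap.congr_fun hW
  simp only [LinearMap.comp_apply] at hV' hW'
  have h1 : ∀ t, rTensor A (tensorCoact K A V W ρV ρW) (mergeMul K A V W t)
      = mergeMul₂ K A V W (TensorProduct.map (rTensor A ρV) (rTensor A ρW) t) := by
    refine LinearMap.congr_fun <| linearMap_ext_fourfold
      (f := rTensor A (tensorCoact K A V W ρV ρW) ∘ₗ mergeMul K A V W)
      (g := mergeMul₂ K A V W ∘ₗ TensorProduct.map (rTensor A ρV) (rTensor A ρW)) ?_
    intro v x w y
    simp [mergeMul₂, tensorCoact_tmul]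
  have h2 : ∀ t, (TensorProduct.assoc K (V ⊗[K] W) A A).symm
        (lTensor (V ⊗[K] W) (Coalgebra.comul (R := K)) (mergeMul K A V W t))
      = mergeMul₂ K A V W (TensorProduct.map
          ((TensorProduct.assoc K V A A).symm.toLinearMap
            ∘ₗ lTensor V (Coalgebra.comul (R := K)))
          ((TensorProduct.assoc K W A A).symm.toLinearMap
            ∘ₗ lTensor W (Coalgebra.comul (R := K))) t) := by
    refine LinearMap.congr_fun <| linearMap_ext_fourfold
      (f := (TensorProduct.assoc K (V ⊗[K] W) A A).symm.toLinearMap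
        ∘ₗ lTensor (V ⊗[K] W) (Coalgebra.comul (R := K)) ∘ₗ mergeMul K A V W)
      (g := mergeMul₂ K A V W ∘ₗ TensorProduct.map
          ((TensorProduct.assoc K V A A).symm.toLinearMap
            ∘ₗ lTensor V (Coalgebra.comul (R := K)))
          ((TensorProduct.assoc K W A A).symm.toLinearMap
            ∘ₗ lTensor W (Coalgebra.comul (R := K)))) ?_
    intro v x w y
    simp only [LinearMap.comp_apply, mergeMul_tmul, lTensor_tmul, TensorProduct.map_tmul,
      Bialgebra.comul_mul]
    generalize Coalgebra.comul (R := K) x = s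
    generalize Coalgebra.comul (R := K) y = t
    induction s with
    | zero => simp
    | add a b ha hb => simp only [map_add, mul_add, tmul_add, add_tmul, ha, hb]
    | tmul x₁ x₂ =>
      induction t with
      | zero => simp
      | add a b ha hb => simp only [map_add, add_mul, tmul_add, ha, hb]
      | tmul y₁ y₂ => simp [mergeMul₂]
  refine TensorProduct.ext' fun v w => ?_
  simp only [LinearMap.comp_apply, tensorCoact_tmul, LinearEquiv.coe_coe]
  rw [h1, h2, TensorProduct.map_tmul, TensorProduct.map_tmul, hV', hW']
  rfl

theorem isCounital_tensorCoact {ρV : V →ₗ[K] V ⊗[K] A} {ρW : W →ₗ[K] W ⊗[K] A}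
    (hV : IsCounital (K := K) (A := A) ρV) (hW : IsCounital (K := K) (A := A) ρW) :
    IsCounital (K := K) (A := A) (tensorCoact K A V W ρV ρW) := by
  have hV' := LinearMap.congr_fun hV
  have hW' := LinearMap.congr_fun hW
  simp only [LinearMap.comp_apply] at hV' hW'
  have h1 : ∀ t, lTensor (V ⊗[K] W) (Coalgebra.counit (R := K)) (mergeMul K A V W t)
      = mergeMul K K V W (TensorProduct.map (lTensor V (Coalgebra.counit (R := K)))
          (lTensor W (Coalgebra.counit (R := K))) t) := by
    refine LinearMap.congr_fun <| linearMap_ext_fourfold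
      (f := lTensor (V ⊗[K] W) (Coalgebra.counit (R := K)) ∘ₗ mergeMul K A V W)
      (g := mergeMul K K V W ∘ₗ TensorProduct.map (lTensor V (Coalgebra.counit (R := K)))
          (lTensor W (Coalgebra.counit (R := K)))) ?_
    intro v x w y
    simp
  refine TensorProduct.ext' fun v w => ?_
  simp only [LinearMap.comp_apply, tensorCoact_tmul]
  rw [h1, TensorProduct.map_tmul, hV', hW']
  simp

/-! ### The action on the tensor product -/

/-- The twisted diagonal action comes from an algebra homomorphism `A → End (V ⊗ W)`. -/
theorem exists_algHom_twistDiagAct [Module A V] [IsScalarTower K A V] [Module A W]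
    [IsScalarTower K A W] (φ₁ φ₂ : A →ₐ[K] A) :
    ∃ Φ : A →ₐ[K] Module.End K (V ⊗[K] W), ∀ a t,
      twistDiagAct K A V W (actMap K A V) (actMap K A W) φ₁.toLinearMap φ₂.toLinearMap (a ⊗ₜ t)
        = Φ a t := by
  refine ⟨(Module.endTensorEndAlgHom (R := K) (S := K) (A := K) (M := V) (N := W)).comp
    ((Algebra.TensorProduct.map ((Algebra.lsmul K K V).comp φ₁)
      ((Algebra.lsmul K K W).comp φ₂)).comp (Bialgebra.comulAlgHom K A)), fun a t => ?_⟩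
  simp only [twistDiagAct, LinearMap.comp_apply, rTensor_tmul, AlgHom.comp_apply,
    Bialgebra.comulAlgHom_apply]
  generalize Coalgebra.comul (R := K) a = z
  induction z with
  | zero => simp
  | add x y hx hy => simp only [map_add, add_tmul, LinearMap.add_apply, hx, hy]
  | tmul x y =>
    induction t with
    | zero => simp
    | add x y hx hy => simp only [map_add, tmul_add, hx, hy]
    | tmul v w =>
      simp only [Algebra.TensorProduct.map_tmul, Module.endTensorEndAlgHom_apply]
      simp [actMap]

/-! ### The compatibility condition on the tensor product -/

/-- `ydOp` pulled back along a Hopf automorphism and pushed forward along an algebra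
homomorphism `h` remains a convolution product of three factors. -/
theorem comp_ydOp_comp {E : Type*} [Semiring E] [Algebra K E] {γ : A ≃ₐ[K] A}
    (hγ : IsHopfAuto K A γ) (h : Module.End K (V ⊗[K] A) →ₐ[K] E)
    (σ : A →ₗ[K] Module.End K V) (φ ψ : A →ₗ[K] A) :
    toConv (h.toLinearMap ∘ₗ ydOp σ φ ψ ∘ₗ γ.toLinearMap)
      = toConv (h.toLinearMap ∘ₗ opRight V (φ ∘ₗ γ.toLinearMap))
        * (toConv (h.toLinearMap ∘ₗ rTensorHom A ∘ₗ σ ∘ₗ γ.toLinearMap)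
          * toConv (h.toLinearMap ∘ₗ opLeft V (ψ ∘ₗ γ.toLinearMap))) := by
  apply ofConv_injective
  rw [ofConv_toConv, ydOp, ← LinearMap.comp_assoc, LinearMap.algHom_comp_convMul_distrib,
    hγ.convMul_comp, LinearMap.algHom_comp_convMul_distrib, ofConv_toConv, hγ.convMul_comp]
  rfl

/-- Applying the coaction after the action amounts to acting by the convolution product of the
two compatibility operators, before the two `A`-components are multiplied. -/
theorem tensorCoact_twistDiagAct {ρV : V →ₗ[K] V ⊗[K] A} {ρW : W →ₗ[K] W ⊗[K] A}
    {σV : A ⊗[K] V →ₗ[K] V} {σW : A ⊗[K] W →ₗ[K] W}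
    {GV : A →ₗ[K] Module.End K (V ⊗[K] A)} {GW : A →ₗ[K] Module.End K (W ⊗[K] A)}
    (hV : ∀ a v, ρV (σV (a ⊗ₜ v)) = GV a (ρV v)) (hW : ∀ a w, ρW (σW (a ⊗ₜ w)) = GW a (ρW w))
    (φ₁ φ₂ : A →ₗ[K] A) (a : A) (v : V) (w : W) :
    tensorCoact K A V W ρV ρW (twistDiagAct K A V W σV σW φ₁ φ₂ (a ⊗ₜ (v ⊗ₜ w)))
      = mergeMul K A V W
        ((toConv ((endFst K (V ⊗[K] A) (W ⊗[K] A)).toLinearMap ∘ₗ GV ∘ₗ φ₁)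
          * toConv ((endSnd K (V ⊗[K] A) (W ⊗[K] A)).toLinearMap ∘ₗ GW ∘ₗ φ₂)).ofConv a
          (ρV v ⊗ₜ ρW w)) := by
  simp only [twistDiagAct, LinearMap.comp_apply, rTensor_tmul, LinearMap.convMul_def, ofConv_toConv]
  generalize Coalgebra.comul (R := K) a = z
  induction z with
  | zero => simp
  | add x y hx hy => simp only [map_add, add_tmul, LinearMap.add_apply, hx, hy]
  | tmul x y => simp [tensorCoact_tmul, hV, hW]

/-- The two inner factors, `χ(a₍₁₎)` multiplying the `A`-component of `V` on the left and
`κ(a₍₂₎)` multiplying that of `W` on the right, cancel after the components are multiplied. -/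
theorem intertwines_inner {χ κ : A →ₗ[K] A}
    (h : ∀ a, mul' K A (TensorProduct.map κ χ
      (TensorProduct.comm K A A (Coalgebra.comul (R := K) a)))
      = algebraMap K A (Coalgebra.counit (R := K) a)) :
    Intertwines (mergeMul K A V W)
      (toConv ((endFst K (V ⊗[K] A) (W ⊗[K] A)).toLinearMap ∘ₗ opLeft V χ)
        * toConv ((endSnd K (V ⊗[K] A) (W ⊗[K] A)).toLinearMap ∘ₗ opRight W κ)) 1 := by
  intro a
  refine linearMap_ext_fourfold fun v x w y => ?_
  have key : (v ⊗ₜ[K] w) ⊗ₜ[K] (y * mul' K A (TensorProduct.map κ χ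
      (TensorProduct.comm K A A (Coalgebra.comul (R := K) a))) * x)
      = Coalgebra.counit (R := K) a • ((v ⊗ₜ[K] w) ⊗ₜ[K] (y * x)) := by
    rw [h, Algebra.algebraMap_eq_smul_one]
    simp
  simp only [LinearMap.comp_apply, mergeMul_tmul, LinearMap.convOne_def, ofConv_toConv, LinearMap.convMul_def]
  refine Eq.trans ?_ (key.trans (by simp [Algebra.algebraMap_eq_smul_one]))
  generalize Coalgebra.comul (R := K) a = z
  induction z with
  | zero => simp
  | add x y hx hy =>
    simp only [map_add, LinearMap.add_apply, hx, hy, mul_add, add_mul, tmul_add]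
  | tmul x y => simp [mul_assoc]

end Tensor

variable (K A)

theorem tensor_of_generalized_yetterDrinfeld
    (α β γ δ : A ≃ₐ[K] A)
    (hα : IsHopfAuto K A α) (hβ : IsHopfAuto K A β)
    (hγ : IsHopfAuto K A γ) (hδ : IsHopfAuto K A δ)
    (V W : Type*) [AddCommGroup V] [Module K V] [Module A V] [IsScalarTower K A V]
    [AddCommGroup W] [Module K W] [Module A W] [IsScalarTower K A W]
    (ρV : V →ₗ[K] V ⊗[K] A) (ρW : W →ₗ[K] W ⊗[K] A)
    (hcoassocV : IsCoassoc (K := K) (A := A) ρV)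
    (hcounitV : IsCounital (K := K) (A := A) ρV)
    (hcoassocW : IsCoassoc (K := K) (A := A) ρW)
    (hcounitW : IsCounital (K := K) (A := A) ρW)
    (Si : A →ₗ[K] A)
    (hSi₁ : Si ∘ₗ antipodeL K A = LinearMap.id)
    (hSi₂ : antipodeL K A ∘ₗ Si = LinearMap.id)
    -- `V` is an `(α,β)`-Yetter-Drinfel'd module:
    (hYDV : ρV ∘ₗ actMap K A V
      = ydRHS K A V (actMap K A V) ρV (α.toLinearMap ∘ₗ Si) β.toLinearMap)
    -- `W` is a `(γ,δ)`-Yetter-Drinfel'd module: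
    (hYDW : ρW ∘ₗ actMap K A W
      = ydRHS K A W (actMap K A W) ρW (γ.toLinearMap ∘ₗ Si) δ.toLinearMap) :
    -- the twisted diagonal action on `V ⊗ W` is a module action:
    (∀ (a b : A) (t : V ⊗[K] W),
        twistDiagAct K A V W (actMap K A V) (actMap K A W) γ.toLinearMap
            (γ.symm.toLinearMap ∘ₗ β.toLinearMap ∘ₗ γ.toLinearMap) ((a * b) ⊗ₜ[K] t)
          = twistDiagAct K A V W (actMap K A V) (actMap K A W) γ.toLinearMap
              (γ.symm.toLinearMap ∘ₗ β.toLinearMap ∘ₗ γ.toLinearMap)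
              (a ⊗ₜ[K] twistDiagAct K A V W (actMap K A V) (actMap K A W) γ.toLinearMap
                (γ.symm.toLinearMap ∘ₗ β.toLinearMap ∘ₗ γ.toLinearMap) (b ⊗ₜ[K] t))) ∧
    (∀ t : V ⊗[K] W,
        twistDiagAct K A V W (actMap K A V) (actMap K A W) γ.toLinearMap
          (γ.symm.toLinearMap ∘ₗ β.toLinearMap ∘ₗ γ.toLinearMap) ((1 : A) ⊗ₜ[K] t) = t) ∧
    -- the coaction is coassociative and counital:
    IsCoassoc (K := K) (A := A) (tensorCoact K A V W ρV ρW) ∧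
    IsCounital (K := K) (A := A) (tensorCoact K A V W ρV ρW) ∧
    -- and `V ⊗ W` satisfies the `(αγ, δγ⁻¹βγ)`-Yetter-Drinfel'd compatibility:
    (tensorCoact K A V W ρV ρW
        ∘ₗ twistDiagAct K A V W (actMap K A V) (actMap K A W) γ.toLinearMap
            (γ.symm.toLinearMap ∘ₗ β.toLinearMap ∘ₗ γ.toLinearMap)
      = ydRHS K A (V ⊗[K] W)
          (twistDiagAct K A V W (actMap K A V) (actMap K A W) γ.toLinearMap
            (γ.symm.toLinearMap ∘ₗ β.toLinearMap ∘ₗ γ.toLinearMap))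
          (tensorCoact K A V W ρV ρW)
          ((α.toLinearMap ∘ₗ γ.toLinearMap) ∘ₗ Si)
          (δ.toLinearMap ∘ₗ γ.symm.toLinearMap ∘ₗ β.toLinearMap ∘ₗ γ.toLinearMap)) := by
  have hθ : IsHopfAuto K A ((γ.trans β).trans γ.symm) := hγ.symm.trans (hβ.trans hγ)
  have hSγ := hγ.antipodeInv_comm hSi₁ hSi₂
  obtain ⟨Φ, hΦ⟩ := exists_algHom_twistDiagAct (K := K) (V := V) (W := W) (γ : A →ₐ[K] A)
    (((γ.trans β).trans γ.symm : A ≃ₐ[K] A) : A →ₐ[K] A)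
  refine ⟨fun a b t => ?_, fun t => ?_, isCoassoc_tensorCoact hcoassocV hcoassocW,
    isCounital_tensorCoact hcounitV hcounitW, ?_⟩
  · refine (hΦ _ _).trans ?_
    rw [map_mul, Module.End.mul_apply, ← hΦ b, ← hΦ a]
    rfl
  · refine (hΦ _ _).trans ?_
    rw [map_one, Module.End.one_apply]
  have hV : ∀ a v, ρV (actMap K A V (a ⊗ₜ v))
      = ydOp (TensorProduct.curry (actMap K A V)) (α.toLinearMap ∘ₗ Si) β.toLinearMap a (ρV v) :=
    fun a v => (LinearMap.congr_fun hYDV (a ⊗ₜ v)).trans (ydRHS_apply ..)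
  have hW : ∀ a w, ρW (actMap K A W (a ⊗ₜ w))
      = ydOp (TensorProduct.curry (actMap K A W)) (γ.toLinearMap ∘ₗ Si) δ.toLinearMap a (ρW w) :=
    fun a w => (LinearMap.congr_fun hYDW (a ⊗ₜ w)).trans (ydRHS_apply ..)
  set θ : A ≃ₐ[K] A := (γ.trans β).trans γ.symm with hθ_def
  have hθ_lin : γ.symm.toLinearMap ∘ₗ β.toLinearMap ∘ₗ γ.toLinearMap = θ.toLinearMap := rfl
  rw [hθ_lin]
  -- The inner factors cancel, since `γ S⁻¹ θ = S⁻¹ β γ`.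
  have hinner : ∀ a, mul' K A (TensorProduct.map ((γ.toLinearMap ∘ₗ Si) ∘ₗ θ.toLinearMap)
      (β.toLinearMap ∘ₗ γ.toLinearMap) (TensorProduct.comm K A A (Coalgebra.comul (R := K) a)))
      = algebraMap K A (Coalgebra.counit (R := K) a) := by
    intro a
    have h := antipodeInv_mul hSi₁ hSi₂ (γ.trans β a)
    rw [(hβ.trans hγ).counit_apply, (hβ.trans hγ).comul_apply] at h
    rw [← h]
    generalize Coalgebra.comul (R := K) a = z
    induction z with
    | zero => simp
    | add x y hx hy => simp only [map_add, hx, hy]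
    | tmul x y => simp [← hSγ, hθ_def]
  -- The action operator on `V ⊗ W ⊗ A` splits as a convolution product.
  have hact : toConv (rTensorHom A ∘ₗ TensorProduct.curry
        (twistDiagAct K A V W (actMap K A V) (actMap K A W) γ.toLinearMap θ.toLinearMap))
      = toConv ((endFst K (V ⊗[K] W) A).toLinearMap ∘ₗ rTensorHom W ∘ₗ
          TensorProduct.curry (actMap K A V) ∘ₗ γ.toLinearMap)
        * toConv ((endFst K (V ⊗[K] W) A).toLinearMap ∘ₗ lTensorHom V ∘ₗ
          TensorProduct.curry (actMap K A W) ∘ₗ θ.toLinearMap) := by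
    apply ofConv_injective
    have h := LinearMap.algHom_comp_convMul_distrib (endFst K (V ⊗[K] W) A)
      (toConv (rTensorHom W ∘ₗ TensorProduct.curry (actMap K A V) ∘ₗ γ.toLinearMap))
      (toConv (lTensorHom V ∘ₗ TensorProduct.curry (actMap K A W) ∘ₗ θ.toLinearMap))
    refine Eq.trans ?_ h
    refine LinearMap.ext fun a => congrArg (rTensor A) (LinearMap.ext fun t => ?_)
    exact twistDiagAct_apply ..
  refine TensorProduct.ext' fun a t => ?_
  rw [ydRHS_apply, ydOp, hact, LinearMap.comp_apply]
  induction t with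
  | zero => simp
  | add x y hx hy => simp only [map_add, tmul_add, hx, hy]
  | tmul v w =>
    rw [tensorCoact_twistDiagAct hV hW, tensorCoact_tmul, comp_ydOp_comp hγ, comp_ydOp_comp hθ]
    have hP : Intertwines (mergeMul K A V W)
        (toConv ((endFst K (V ⊗[K] A) (W ⊗[K] A)).toLinearMap ∘ₗ
          opRight V ((α.toLinearMap ∘ₗ Si) ∘ₗ γ.toLinearMap)))
        (toConv (opRight (V ⊗[K] W) ((α.toLinearMap ∘ₗ γ.toLinearMap) ∘ₗ Si))) := by
      intro a
      refine linearMap_ext_fourfold fun v x w y => ?_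
      simp [hSγ, mul_assoc]
    have hQ : Intertwines (mergeMul K A V W)
        (toConv ((endFst K (V ⊗[K] A) (W ⊗[K] A)).toLinearMap ∘ₗ rTensorHom A ∘ₗ
          TensorProduct.curry (actMap K A V) ∘ₗ γ.toLinearMap))
        (toConv ((endFst K (V ⊗[K] W) A).toLinearMap ∘ₗ rTensorHom W ∘ₗ
          TensorProduct.curry (actMap K A V) ∘ₗ γ.toLinearMap)) := by
      intro a
      refine linearMap_ext_fourfold fun v x w y => ?_
      simp
    have hT : Intertwines (mergeMul K A V W)
        (toConv ((endSnd K (V ⊗[K] A) (W ⊗[K] A)).toLinearMap ∘ₗ rTensorHom A ∘ₗ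
          TensorProduct.curry (actMap K A W) ∘ₗ θ.toLinearMap))
        (toConv ((endFst K (V ⊗[K] W) A).toLinearMap ∘ₗ lTensorHom V ∘ₗ
          TensorProduct.curry (actMap K A W) ∘ₗ θ.toLinearMap)) := by
      intro a
      refine linearMap_ext_fourfold fun v x w y => ?_
      simp
    have hU : Intertwines (mergeMul K A V W)
        (toConv ((endSnd K (V ⊗[K] A) (W ⊗[K] A)).toLinearMap ∘ₗ
          opLeft W (δ.toLinearMap ∘ₗ θ.toLinearMap)))
        (toConv (opLeft (V ⊗[K] W) (δ.toLinearMap ∘ₗ θ.toLinearMap))) := by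
      intro a
      refine linearMap_ext_fourfold fun v x w y => ?_
      simp [mul_assoc]
    have h := (hP.mul (hQ.mul ((intertwines_inner hinner).mul (hT.mul hU)))) a
    replace h := LinearMap.congr_fun h (ρV v ⊗ₜ ρW w)
    simp only [one_mul, mul_assoc, LinearMap.comp_apply] at h ⊢
    exact h

end
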